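/- Let H := {g ∈ ℝ^n : g > 0_n} (the nonzero nonnegative vectors) and B := {A ∈ ℝ^{n×n} : A >_L 0_n} (the matrices all of whose columns are lexicographically positive). Then H^⧫ = B and B^◊ = H, where H^⧫ := {A ∈ ℝ^{n×n} : Ag >_L 0_n for all g ∈ H} and B^◊ := {g ∈ ℝ^n : Ag >_L 0_n for all A ∈ B}. -/

import Mathlib

open Matrix BigOperators

/-- `g <_L f`: `g` is lexicographically less than `f`, i.e. at the first index where they
differ, `g` is smaller. -/
def LexLt {n : ℕ} (g f : Fin n → ℝ) : Prop :=
  ∃ k : Fin n, (∀ i : Fin n, i < k → g i = f i) ∧ g k < f k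

/-- `g ≤_L f`: `g <_L f` or `g = f`. -/
def LexLe {n : ℕ} (g f : Fin n → ℝ) : Prop := LexLt g f ∨ g = f

/-- `A >_L 0_n`: every column of `A` is lexicographically positive. -/
def ColsLexPos {n : ℕ} (A : Matrix (Fin n) (Fin n) ℝ) : Prop :=
  ∀ j : Fin n, LexLt 0 (fun i => A i j)

/-- A coherent set of desirable gambles on an `n`-element outcome space. -/
def CohDesirable {n : ℕ} (K : Set (Fin n → ℝ)) : Prop :=
  (∀ g ∈ K, ∀ f ∈ K, g + f ∈ K) ∧                      -- A1
  (∀ g ∈ K, ∀ l : ℝ, 0 < l → l • g ∈ K) ∧              -- A2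
  (∀ g : Fin n → ℝ, (∀ i, 0 ≤ g i) → g ≠ 0 → g ∈ K) ∧  -- A3
  (0 : Fin n → ℝ) ∉ K                                   -- A4

/-- `K^⧫`: the matrices mapping every element of `K` to a lexicographically positive
vector. -/
def matPolar {n : ℕ} (K : Set (Fin n → ℝ)) : Set (Matrix (Fin n) (Fin n) ℝ) :=
  {A | ∀ g ∈ K, LexLt 0 (A.mulVec g)}

/-- `𝒜^◊`: the vectors mapped by every matrix of `𝒜` to a lexicographically positive
vector. -/
def vecPolar {n : ℕ} (S : Set (Matrix (Fin n) (Fin n) ℝ)) : Set (Fin n → ℝ) :=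
  {g | ∀ A ∈ S, LexLt 0 (A.mulVec g)}

/-!
Writing `A *ᵥ g` as the combination of the columns of `A` with coefficients `g` shows that
lexicographically positive columns and `0 < g` give a lexicographically positive `A *ᵥ g`, because
lexicographic positivity is preserved by sums and by positive scaling. Conversely, unit vectors
recover the columns of `A`, and matrices permuting the coordinates, whose columns are unit vectors,
can move any coordinate of `g` to the leading position, where lexicographic positivity forces it to
be nonnegative.
-/

section Lexicographic

variable {ι κ R : Type*}

theorem toLex_mulVec_eq_sum [NonUnitalNonAssocSemiring R] [Fintype ι] (A : Matrix κ ι R)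
    (g : ι → R) : toLex (A *ᵥ g) = ∑ j, toLex fun i ↦ A.col j i * g j := by
  have hsum : A *ᵥ g = ∑ j, fun i ↦ A.col j i * g j := by
    ext i
    simp [mulVec, dotProduct]
  rw [hsum]
  exact map_sum (toLexAddEquiv (κ → R)) _ _

variable [LinearOrder κ]

theorem toLex_mul_const_pos [MulZeroClass R] [Preorder R] [MulPosStrictMono R] {v : κ → R} {c : R}
    (hv : 0 < toLex v) (hc : 0 < c) : 0 < toLex fun i ↦ v i * c := by
  obtain ⟨k, hzero, hpos⟩ := hv
  refine ⟨k, fun i hi ↦ ?_, Right.mul_pos hpos hc⟩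
  have hvi : v i = 0 := (hzero i hi).symm
  exact (mul_eq_zero_of_left hvi c).symm

theorem apply_nonneg_of_toLex_pos_of_isBot [Zero R] [Preorder R] {v : κ → R} {b : κ}
    (hv : 0 < toLex v) (hb : IsBot b) : 0 ≤ v b := by
  obtain ⟨k, hzero, hpos⟩ := hv
  rcases (hb k).lt_or_eq with hbk | rfl
  · exact (hzero b hbk).le
  · exact hpos.le

variable [Semiring R] [PartialOrder R] [IsStrictOrderedRing R] [Fintype ι]

theorem toLex_mulVec_pos {A : Matrix κ ι R} {g : ι → R} (hA : ∀ j, 0 < toLex (A.col j))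
    (hg : 0 < g) : 0 < toLex (A *ᵥ g) := by
  obtain ⟨hg_nonneg, j, hgj⟩ := Pi.lt_def.mp hg
  rw [toLex_mulVec_eq_sum]
  refine Finset.sum_pos' (fun l _ ↦ ?_) ⟨j, Finset.mem_univ j, toLex_mul_const_pos (hA j) hgj⟩
  rcases (hg_nonneg l).eq_or_lt with hgl | hgl
  · simp only [← hgl, Pi.zero_apply, mul_zero]
    exact le_rfl
  · exact (toLex_mul_const_pos (hA l) hgl).le

theorem forall_toLex_mulVec_pos_iff_col_pos {A : Matrix κ ι R} :
    (∀ g, 0 < g → 0 < toLex (A *ᵥ g)) ↔ ∀ j, 0 < toLex (A.col j) := by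
  classical
  refine ⟨fun h j ↦ ?_, fun hA _ ↦ toLex_mulVec_pos hA⟩
  simpa only [mulVec_single_one] using h (Pi.single j 1) (Pi.single_pos.mpr one_pos)

end Lexicographic

section Permutation

variable {ι R : Type*}

theorem pos_of_forall_toLex_comp_perm_pos [LinearOrder ι] [Finite ι] [Zero R] [PartialOrder R]
    {g : ι → R} (h : ∀ σ : Equiv.Perm ι, 0 < toLex (g ∘ σ)) : 0 < g := by
  refine lt_of_le_of_ne (fun i ↦ ?_) ?_
  · have : Nonempty ι := ⟨i⟩
    obtain ⟨b, hb⟩ := Finite.exists_min (id : ι → ι)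
    simpa using apply_nonneg_of_toLex_pos_of_isBot (h (Equiv.swap b i)) hb
  · rintro rfl
    exact (h 1).false

variable [Semiring R]

theorem one_submatrix_mulVec {κ : Type*} [Fintype ι] [DecidableEq ι] (f : κ → ι) (g : ι → R) :
    (1 : Matrix ι ι R).submatrix f id *ᵥ g = g ∘ f := by
  ext i
  simp [mulVec, dotProduct, one_apply]

variable [LinearOrder ι] [PartialOrder R] [IsStrictOrderedRing R]

theorem toLex_col_one_submatrix_pos [WellFoundedLT ι] (σ : Equiv.Perm ι) (j : ι) :
    0 < toLex (((1 : Matrix ι ι R).submatrix σ id).col j) := by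
  have hcol : ((1 : Matrix ι ι R).submatrix σ id).col j = Pi.single (σ.symm j) 1 := by
    ext i
    simp [one_apply, Pi.single_apply, Equiv.eq_symm_apply]
  rw [hcol]
  exact Pi.toLex_strictMono (Pi.single_pos.mpr one_pos)

theorem toLex_comp_perm_pos_of_forall_toLex_mulVec_pos [Fintype ι] {g : ι → R}
    (h : ∀ A : Matrix ι ι R, (∀ j, 0 < toLex (A.col j)) → 0 < toLex (A *ᵥ g))
    (σ : Equiv.Perm ι) : 0 < toLex (g ∘ σ) := by
  simpa only [one_submatrix_mulVec] using h _ (toLex_col_one_submatrix_pos σ)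

end Permutation

theorem polar_posOrthant_eq_general {ι R : Type*} [Fintype ι] [LinearOrder ι] [Semiring R]
    [PartialOrder R] [IsStrictOrderedRing R] :
    {A : Matrix ι ι R | ∀ g, 0 < g → 0 < toLex (A *ᵥ g)} =
        {A : Matrix ι ι R | ∀ j, 0 < toLex (A.col j)} ∧
    {g : ι → R | ∀ A : Matrix ι ι R, (∀ j, 0 < toLex (A.col j)) → 0 < toLex (A *ᵥ g)} =
        {g : ι → R | 0 < g} := by
  refine ⟨Set.ext fun _ ↦ forall_toLex_mulVec_pos_iff_col_pos, Set.ext fun g ↦ ⟨fun h ↦ ?_, ?_⟩⟩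
  · exact pos_of_forall_toLex_comp_perm_pos (toLex_comp_perm_pos_of_forall_toLex_mulVec_pos h)
  · exact fun hg _ hA ↦ toLex_mulVec_pos hA hg

theorem lexLt_iff_toLex_lt {n : ℕ} {g f : Fin n → ℝ} : LexLt g f ↔ toLex g < toLex f :=
  Iff.rfl

theorem setOf_nonneg_and_ne_zero_eq_setOf_pos {ι R : Type*} [Zero R] [PartialOrder R] :
    {g : ι → R | (∀ i, 0 ≤ g i) ∧ g ≠ 0} = {g | 0 < g} :=
  Set.ext fun g ↦ (lt_iff_le_and_ne' (a := g) (b := 0)).symm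

/-- The polar of the cone of nonzero nonnegative gambles is the set of matrices with
lexicographically positive columns, and vice versa. -/
theorem polar_posOrthant_eq {n : ℕ} :
    matPolar {g : Fin n → ℝ | (∀ i, 0 ≤ g i) ∧ g ≠ 0} =
        {A : Matrix (Fin n) (Fin n) ℝ | ColsLexPos A} ∧
    vecPolar {A : Matrix (Fin n) (Fin n) ℝ | ColsLexPos A} =
        {g : Fin n → ℝ | (∀ i, 0 ≤ g i) ∧ g ≠ 0} := by
  simp only [setOf_nonneg_and_ne_zero_eq_setOf_pos, matPolar, vecPolar, ColsLexPos,
    lexLt_iff_toLex_lt]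
  exact polar_posOrthant_eq_general
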